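/- Assume conditions (i)–(iii) hold and f is convolution invertible with inverse f^{-1}. For i ≥ 1 and h_0, h_1, …, h_i ∈ H define U(h_0, …, h_i) = γ(h_0^{(1)}) γ^{-1}(h_i^{(2)}) ⋯ γ^{-1}(h_1^{(2)}) γ^{-1}(h_0^{(2)} S(h_1^{(1)} ⋯ h_i^{(1)})) ∈ E. Then: (a) ν(U(h_0, …, h_i)) = U(h_0, …, h_i) ⊗ 1_H, so U(h_0, …, h_i) lies in A#1; and (b) γ(h_0) γ^{-1}(h_i) ⋯ γ^{-1}(h_1) = U(h_0^{(1)}, h_1^{(2)}, …, h_i^{(2)}) γ(h_0^{(2)} S(h_1^{(1)} ⋯ h_i^{(1)})). -/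

import Mathlib

open TensorProduct

noncomputable section CrossedProduct

variable (k A H : Type*) [CommRing k] [Ring A] [Algebra k A] [Ring H] [HopfAlgebra k H]

/-- A chosen "Sweedler representation" of the comultiplication of `H`:
`comul h = ∑_{i < n h} c₁ h i ⊗ c₂ h i` for every `h`. -/
def IsSweedlerRep (n : H → ℕ) (c₁ c₂ : H → ℕ → H) : Prop :=
  ∀ h : H, Coalgebra.comul (R := k) h = ∑ i ∈ Finset.range (n h), c₁ h i ⊗ₜ[k] c₂ h i

/-- `σ` is a weak action of `H` on `A`: `(ab)^h = a^{h⁽¹⁾} b^{h⁽²⁾}`, `1^h = ε(h)1`, `a^1 = a`. -/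
def IsWeakAction (n : H → ℕ) (c₁ c₂ : H → ℕ → H) (σ : H →ₗ[k] A →ₗ[k] A) : Prop :=
  (∀ (h : H) (a b : A),
      σ h (a * b) = ∑ i ∈ Finset.range (n h), σ (c₁ h i) a * σ (c₂ h i) b) ∧
  (∀ h : H, σ h (1 : A) = Coalgebra.counit (R := k) h • (1 : A)) ∧
  (∀ a : A, σ (1 : H) a = a)

/-- Condition (i): normality of the cocycle `f`. -/
def IsNormal (f : H →ₗ[k] H →ₗ[k] A) : Prop :=
  ∀ h : H, f h (1 : H) = Coalgebra.counit (R := k) h • (1 : A) ∧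
    f (1 : H) h = Coalgebra.counit (R := k) h • (1 : A)

/-- Condition (ii): the cocycle condition
`f(l⁽¹⁾,m⁽¹⁾)^{h⁽¹⁾} f(h⁽²⁾, l⁽²⁾m⁽²⁾) = f(h⁽¹⁾,l⁽¹⁾) f(h⁽²⁾l⁽²⁾, m)`. -/
def IsCocycle (n : H → ℕ) (c₁ c₂ : H → ℕ → H) (σ : H →ₗ[k] A →ₗ[k] A)
    (f : H →ₗ[k] H →ₗ[k] A) : Prop :=
  ∀ h l m : H,
    (∑ i ∈ Finset.range (n h), ∑ j ∈ Finset.range (n l), ∑ p ∈ Finset.range (n m),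
      σ (c₁ h i) (f (c₁ l j) (c₁ m p)) * f (c₂ h i) (c₂ l j * c₂ m p)) =
    ∑ i ∈ Finset.range (n h), ∑ j ∈ Finset.range (n l),
      f (c₁ h i) (c₁ l j) * f (c₂ h i * c₂ l j) m

/-- Condition (iii): the twisted module condition
`(a^{l⁽¹⁾})^{h⁽¹⁾} f(h⁽²⁾,l⁽²⁾) = f(h⁽¹⁾,l⁽¹⁾) a^{h⁽²⁾l⁽²⁾}`. -/
def IsTwistedModule (n : H → ℕ) (c₁ c₂ : H → ℕ → H) (σ : H →ₗ[k] A →ₗ[k] A)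
    (f : H →ₗ[k] H →ₗ[k] A) : Prop :=
  ∀ (h l : H) (a : A),
    (∑ i ∈ Finset.range (n h), ∑ j ∈ Finset.range (n l),
      σ (c₁ h i) (σ (c₁ l j) a) * f (c₂ h i) (c₂ l j)) =
    ∑ i ∈ Finset.range (n h), ∑ j ∈ Finset.range (n l),
      f (c₁ h i) (c₁ l j) * σ (c₂ h i * c₂ l j) a

/-- `finv` is the convolution inverse of `f`:
`f(h⁽¹⁾,l⁽¹⁾) f⁻¹(h⁽²⁾,l⁽²⁾) = f⁻¹(h⁽¹⁾,l⁽¹⁾) f(h⁽²⁾,l⁽²⁾) = ε(h)ε(l)1_A`. -/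
def IsConvInverse (n : H → ℕ) (c₁ c₂ : H → ℕ → H) (f finv : H →ₗ[k] H →ₗ[k] A) : Prop :=
  ∀ h l : H,
    (∑ i ∈ Finset.range (n h), ∑ j ∈ Finset.range (n l),
        f (c₁ h i) (c₁ l j) * finv (c₂ h i) (c₂ l j) =
      (Coalgebra.counit (R := k) h * Coalgebra.counit (R := k) l) • (1 : A)) ∧
    (∑ i ∈ Finset.range (n h), ∑ j ∈ Finset.range (n l),
        finv (c₁ h i) (c₁ l j) * f (c₂ h i) (c₂ l j) =
      (Coalgebra.counit (R := k) h * Coalgebra.counit (R := k) l) • (1 : A))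

/-- The multiplication of `A #_f H` as a bilinear map on `A ⊗[k] H`:
`(a # h)(b # l) = a b^{h⁽¹⁾} f(h⁽²⁾, l⁽¹⁾) # h⁽³⁾ l⁽²⁾`. -/
def crossedMul (σ : H →ₗ[k] A →ₗ[k] A) (f : H →ₗ[k] H →ₗ[k] A) :
    (A ⊗[k] H) →ₗ[k] (A ⊗[k] H) →ₗ[k] (A ⊗[k] H) :=
  TensorProduct.lift
    (((LinearMap.llcomp k (A ⊗[k] H) (A ⊗[k] H) (A ⊗[k] H)).comp
        (TensorProduct.curry
          ((LinearMap.rTensor H (LinearMap.mul' k A)) ∘ₗ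
            (TensorProduct.assoc k A A H).symm.toLinearMap))).compl₂
      (TensorProduct.curry
        ((LinearMap.rTensor H (LinearMap.mul' k A)) ∘ₗ
         (TensorProduct.map
            (TensorProduct.map (TensorProduct.lift σ) (TensorProduct.lift f))
            (LinearMap.mul' k H)) ∘ₗ
         (LinearMap.rTensor (H ⊗[k] H)
            (TensorProduct.tensorTensorTensorComm k H H A H).toLinearMap) ∘ₗ
         (TensorProduct.tensorTensorTensorComm k (H ⊗[k] H) H (A ⊗[k] H) H).toLinearMap ∘ₗ
         (TensorProduct.map
            ((LinearMap.rTensor H (Coalgebra.comul (R := k))) ∘ₗ (Coalgebra.comul (R := k)))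
            ((TensorProduct.assoc k A H H).symm.toLinearMap ∘ₗ
              (LinearMap.lTensor A (Coalgebra.comul (R := k))))))))

/-- The unit `1 # 1` of the crossed product. -/
def oneE : A ⊗[k] H := (1 : A) ⊗ₜ[k] (1 : H)

/-- The map `γ : H → A #_f H`, `γ(h) = 1 # h`. -/
def gam : H →ₗ[k] A ⊗[k] H := TensorProduct.mk k A H 1

/-- The map `h ↦ f⁻¹(S(h⁽²⁾), h⁽³⁾) # S(h⁽¹⁾)`, the convolution inverse of `γ`. -/
def gammaInv (finv : H →ₗ[k] H →ₗ[k] A) : H →ₗ[k] A ⊗[k] H :=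
  (TensorProduct.comm k H A).toLinearMap ∘ₗ
    (TensorProduct.map (HopfAlgebra.antipode (R := k))
      ((TensorProduct.lift finv) ∘ₗ (LinearMap.rTensor H (HopfAlgebra.antipode (R := k))))) ∘ₗ
    (LinearMap.lTensor H (Coalgebra.comul (R := k))) ∘ₗ (Coalgebra.comul (R := k))

/-- The canonical coaction `ν = id_A ⊗ Δ : A #_f H → (A #_f H) ⊗ H`. -/
def nuE : (A ⊗[k] H) →ₗ[k] (A ⊗[k] H) ⊗[k] H :=
  (TensorProduct.assoc k A H H).symm.toLinearMap ∘ₗ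
    (LinearMap.lTensor A (Coalgebra.comul (R := k)))

/-- Convolution product on `Hom_k(H, A #_f H)`: `(u * v)(h) = u(h⁽¹⁾) v(h⁽²⁾)`. -/
def convMul (σ : H →ₗ[k] A →ₗ[k] A) (f : H →ₗ[k] H →ₗ[k] A)
    (u v : H →ₗ[k] A ⊗[k] H) : H →ₗ[k] A ⊗[k] H :=
  (TensorProduct.lift (crossedMul k A H σ f)) ∘ₗ (TensorProduct.map u v) ∘ₗ
    (Coalgebra.comul (R := k))

/-- The unit of the convolution algebra `Hom_k(H, A #_f H)`: `h ↦ ε(h) 1_E`. -/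
def convOne : H →ₗ[k] A ⊗[k] H :=
  (LinearMap.toSpanSingleton k (A ⊗[k] H) (oneE k A H)) ∘ₗ (Coalgebra.counit (R := k))

/-- Sum over iterated (right-nested) Sweedler components:
`swSum n c₁ c₂ r h F = ∑ F (h⁽¹⁾, …, h⁽ʳ⁺¹⁾)`. -/
def swSum {M : Type*} [AddCommMonoid M] (n : H → ℕ) (c₁ c₂ : H → ℕ → H) :
    (r : ℕ) → H → ((Fin (r + 1) → H) → M) → M
  | 0, h, F => F (fun _ => h)
  | (r + 1), h, F =>
      ∑ i ∈ Finset.range (n h), swSum n c₁ c₂ r (c₂ h i) (fun g => F (Fin.cons (c₁ h i) g))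

/-- The product of a list of elements of the crossed product. -/
def prodE (σ : H →ₗ[k] A →ₗ[k] A) (f : H →ₗ[k] H →ₗ[k] A) :
    List (A ⊗[k] H) → A ⊗[k] H
  | [] => oneE k A H
  | x :: L => crossedMul k A H σ f x (prodE σ f L)

end CrossedProduct
section Statement8

variable (k A H : Type*) [CommRing k] [Ring A] [Algebra k A] [Ring H] [HopfAlgebra k H]

/-- The element `U(h₀,…,h_i) = γ(h₀⁽¹⁾) γ⁻¹(h_i⁽²⁾) ⋯ γ⁻¹(h₁⁽²⁾)
γ⁻¹(h₀⁽²⁾ S(h₁⁽¹⁾ ⋯ h_i⁽¹⁾))` of `E = A #_f H`. -/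
noncomputable def Udef (σ : H →ₗ[k] A →ₗ[k] A) (f finv : H →ₗ[k] H →ₗ[k] A)
    (n : H → ℕ) (c₁ c₂ : H → ℕ → H) {i : ℕ} (hh : Fin (i + 1) → H) : A ⊗[k] H :=
  ∑ p ∈ Fintype.piFinset (fun j : Fin (i + 1) => Finset.range (n (hh j))),
    crossedMul k A H σ f (gam k A H (c₁ (hh 0) (p 0)))
      (crossedMul k A H σ f
        (prodE k A H σ f
          ((List.ofFn (fun j : Fin i =>
            gammaInv k A H finv (c₂ (hh j.succ) (p j.succ)))).reverse))
        (gammaInv k A H finv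
          (c₂ (hh 0) (p 0) *
            HopfAlgebra.antipode (R := k)
              ((List.ofFn (fun j : Fin i => c₁ (hh j.succ) (p j.succ))).prod))))

end Statement8

/-!
The crossed product `E = A #_f H` is an `H`-comodule algebra under `ν`, with
`ν(γ(h)) = γ(h⁽¹⁾) ⊗ h⁽²⁾` and `ν(γ⁻¹(h)) = γ⁻¹(h⁽²⁾) ⊗ S(h⁽¹⁾)`. For the word
`W(h₀, …, h_i) = γ(h₀) γ⁻¹(h_i) ⋯ γ⁻¹(h₁)` this gives
`ν(W) = W(h₀⁽¹⁾, h₁⁽²⁾, …, h_i⁽²⁾) ⊗ h₀⁽²⁾ S(h₁⁽¹⁾ ⋯ h_i⁽¹⁾)`, so `U` is the image of `W` under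
`Θ(w) = w₍₀₎ γ⁻¹(w₍₁₎)`. In any cleft extension `Θ` takes coinvariant values and
`w = Θ(w₍₀₎) γ(w₍₁₎)`; applied to `W`, these two facts are (a) and (b).

Associativity of `E` reduces to identities in convolution rings: elements of `E` are values of maps
`g # ρ : x ↦ g(x⁽¹⁾) ⊗ ρ(x⁽²⁾)`, on which the multiplication is
`(g # ρ)(x) (g' # ρ')(y) = (w # ρρ')(x ⊗ y)` with
`w(x ⊗ y) = g(x⁽¹⁾) g'(y⁽¹⁾)^{ρ(x⁽²⁾)} f(ρ(x⁽³⁾), ρ'(y⁽²⁾))`, and the cocycle and twisted module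
conditions are equations between such `w`.
-/

section CleftExtension

open WithConv
open Coalgebra (comul counit Repr)
open HopfAlgebra (antipode)
open scoped Coalgebra

section Convolution

variable {k C D R R' : Type*} [CommSemiring k] [AddCommMonoid C] [Module k C] [Coalgebra k C]
  [AddCommMonoid D] [Module k D] [Coalgebra k D] [Semiring R] [Algebra k R] [Semiring R']
  [Algebra k R']

/-- Precomposition with a coalgebra homomorphism, as a homomorphism of convolution rings. -/
noncomputable def convComap (κ : C →ₗc[k] D) :
    WithConv (D →ₗ[k] R) →+* WithConv (C →ₗ[k] R) where
  toFun u := toConv (u.ofConv ∘ₗ κ.toLinearMap)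
  map_one' := by ext x; simp [LinearMap.convOne_def]
  map_mul' u v := congrArg toConv (LinearMap.convMul_comp_coalgHom_distrib u v κ)
  map_zero' := rfl
  map_add' _ _ := rfl

theorem convComap_apply (κ : C →ₗc[k] D) (u : WithConv (D →ₗ[k] R)) (x : C) :
    convComap κ u x = u (κ x) := rfl

theorem convComap_id (u : WithConv (C →ₗ[k] R)) : convComap (CoalgHom.id k C) u = u := rfl

/-- Postcomposition with an algebra homomorphism, as a homomorphism of convolution rings. -/
noncomputable def convMap (φ : R →ₐ[k] R') :
    WithConv (C →ₗ[k] R) →+* WithConv (C →ₗ[k] R') where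
  toFun u := toConv (φ.toLinearMap ∘ₗ u.ofConv)
  map_one' := by ext x; simp
  map_mul' u v := congrArg toConv (LinearMap.algHom_comp_convMul_distrib φ u v)
  map_zero' := by ext x; simp
  map_add' u v := by ext x; simp

@[simp]
theorem convMap_apply (φ : R →ₐ[k] R') (u : WithConv (C →ₗ[k] R)) (x : C) :
    convMap φ u x = φ (u x) := rfl

variable (k C D) in
/-- The first projection `x ⊗ y ↦ ε(y) x` of a tensor product of coalgebras. -/
noncomputable def fstCoalgHom : C ⊗[k] D →ₗc[k] C :=
  (Coalgebra.TensorProduct.rid k k C).toCoalgHom.comp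
    (Coalgebra.TensorProduct.map (CoalgHom.id k C) (Coalgebra.counitCoalgHom k D))

@[simp]
theorem fstCoalgHom_tmul (x : C) (y : D) : fstCoalgHom k C D (x ⊗ₜ y) = counit (R := k) y • x := rfl

theorem coalgHom_map_id : Coalgebra.TensorProduct.map (CoalgHom.id k C) (CoalgHom.id k D) =
    CoalgHom.id k (C ⊗[k] D) := by
  ext x
  exact congr($(TensorProduct.map_id) x)

theorem lTensor_coassoc_apply (x : C) :
    LinearMap.lTensor C ((TensorProduct.assoc k C C C).toLinearMap ∘ₗ LinearMap.rTensor C comul)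
        (TensorProduct.assoc k C C C (LinearMap.rTensor C comul (comul x))) =
      LinearMap.lTensor C (LinearMap.lTensor C comul)
        (TensorProduct.assoc k C C C (LinearMap.rTensor C comul (comul x))) := by
  rw [Coalgebra.coassoc_apply, ← LinearMap.lTensor_comp_apply, ← LinearMap.lTensor_comp_apply,
    LinearMap.comp_assoc, Coalgebra.coassoc]

theorem sum_counit_right_smul {ι : Type*} {x : C} (𝓡 : Repr k x ι) :
    ∑ i ∈ 𝓡.index, counit (R := k) (𝓡.right i) • 𝓡.left i = x := by
  have tmul_one_eq := congrArg (TensorProduct.rid k C) (Coalgebra.sum_tmul_counit_eq (R := k) 𝓡)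
  simpa only [map_sum, rid_tmul, one_smul] using tmul_one_eq

/-- The representation of `Δ(x ⊗ y)` built from representations of `Δ(x)` and `Δ(y)`; Mathlib's
`Coalgebra.Repr.tmul` requires bialgebras. -/
@[simps]
noncomputable def tmulRepr {ι κ : Type*} {x : C} {y : D} (𝓡 : Repr k x ι) (𝓢 : Repr k y κ) :
    Repr k (x ⊗ₜ[k] y) (ι × κ) where
  index := 𝓡.index ×ˢ 𝓢.index
  left p := 𝓡.left p.1 ⊗ₜ 𝓢.left p.2
  right p := 𝓡.right p.1 ⊗ₜ 𝓢.right p.2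
  eq := by simpa [← 𝓡.eq, ← 𝓢.eq, sum_tmul, tmul_sum, Finset.sum_product] using Finset.sum_comm

end Convolution

section Antipode

open Algebra.TensorProduct (includeLeft includeRight)

variable {k H : Type*} [CommSemiring k] [Semiring H] [HopfAlgebra k H]

theorem comul_antipode (h : H) : comul (R := k) (antipode k h) =
    map (antipode k) (antipode k) (TensorProduct.comm k H H (comul h)) := by
  let inl : WithConv (H →ₗ[k] H) →+* WithConv (H →ₗ[k] H ⊗[k] H) := convMap includeLeft
  let inr : WithConv (H →ₗ[k] H) →+* WithConv (H →ₗ[k] H ⊗[k] H) := convMap includeRight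
  have comul_eq : toConv comul = inl (toConv .id) * inr (toConv .id) := by
    ext h
    rw [(ℛ k h).convMul_apply, ← (ℛ k h).eq]
    simp [inl, inr]
  have left_inv : inr (toConv (antipode k)) * inl (toConv (antipode k)) * toConv comul = 1 := by
    rw [comul_eq, mul_assoc, ← mul_assoc (inl _), ← map_mul inl, LinearMap.antipode_mul_id,
      map_one, one_mul, ← map_mul, LinearMap.antipode_mul_id, map_one]
  have h_eq := congr($(left_inv_eq_right_inv left_inv LinearMap.comul_right_inv) h)
  rw [(ℛ k h).convMul_apply] at h_eq
  simpa [inl, inr, ← (ℛ k h).eq] using h_eq.symm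

variable (k H) in
/-- The representation `Δ(1) = 1 ⊗ 1`. -/
@[simps]
noncomputable def oneRepr : Repr k (1 : H) Unit where
  index := {()}
  left _ := 1
  right _ := 1
  eq := by simp [Algebra.TensorProduct.one_def]

/-- The representation `Δ(S(h)) = S(h⁽²⁾) ⊗ S(h⁽¹⁾)`. -/
@[simps]
noncomputable def antipodeRepr {ι : Type*} {h : H} (𝓡 : Repr k h ι) : Repr k (antipode k h) ι where
  index := 𝓡.index
  left i := antipode k (𝓡.right i)
  right i := antipode k (𝓡.left i)
  eq := by simp [comul_antipode, ← 𝓡.eq]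

theorem antipode_list_prod (L : List H) :
    antipode k L.prod = (L.map (antipode k)).reverse.prod := by
  induction L with
  | nil => simp
  | cons x L ih => simp [HopfAlgebra.antipode_mul_antidistrib, ih]

end Antipode

section Coaction

variable {k C M R R' : Type*} [CommSemiring k] [AddCommMonoid C] [Module k C]
  [AddCommMonoid M] [Module k M] [Semiring R] [Algebra k R] [Semiring R'] [Algebra k R']

/-- The map `φ ⋆ u : w ↦ φ(w₍₀₎) u(w₍₁₎)`, for a coaction `ρ(w) = w₍₀₎ ⊗ w₍₁₎`. -/
noncomputable def coactConv (ρ : M →ₗ[k] M ⊗[k] C) (φ : M →ₗ[k] R) (u : WithConv (C →ₗ[k] R)) :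
    M →ₗ[k] R :=
  LinearMap.mul' k R ∘ₗ map φ u.ofConv ∘ₗ ρ

theorem coactConv_apply_of_eq_sum {ρ : M →ₗ[k] M ⊗[k] C} {ι : Type*} {s : Finset ι} {w : M}
    {y : ι → M} {z : ι → C} (hw : ρ w = ∑ i ∈ s, y i ⊗ₜ z i) (φ : M →ₗ[k] R)
    (u : WithConv (C →ₗ[k] R)) : coactConv ρ φ u w = ∑ i ∈ s, φ (y i) * u (z i) := by
  simp [coactConv, hw]

variable [Coalgebra k C]

theorem algHom_comp_coactConv (F : R →ₐ[k] R') (ρ : M →ₗ[k] M ⊗[k] C) (φ : M →ₗ[k] R)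
    (u : WithConv (C →ₗ[k] R)) :
    F.toLinearMap ∘ₗ coactConv ρ φ u = coactConv ρ (F.toLinearMap ∘ₗ φ) (convMap F u) := by
  have mul_comp : F.toLinearMap ∘ₗ LinearMap.mul' k R =
      LinearMap.mul' k R' ∘ₗ map F.toLinearMap F.toLinearMap := by
    ext
    simp
  rw [coactConv, ← LinearMap.comp_assoc, mul_comp, LinearMap.comp_assoc, ← LinearMap.comp_assoc ρ,
    ← map_comp]
  rfl

/-- A right coaction of a coalgebra, i.e. a right comodule structure. -/
structure IsCoaction (ρ : M →ₗ[k] M ⊗[k] C) : Prop where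
  coassoc (w : M) : TensorProduct.assoc k M C C (LinearMap.rTensor C ρ (ρ w)) =
    LinearMap.lTensor M comul (ρ w)
  counit_smul (w : M) : TensorProduct.rid k M (LinearMap.lTensor M counit (ρ w)) = w

theorem IsCoaction.coactConv_one {ρ : M →ₗ[k] M ⊗[k] C} (hρ : IsCoaction ρ) (φ : M →ₗ[k] R) :
    coactConv ρ φ 1 = φ := by
  ext w
  obtain ⟨s, hs⟩ := exists_finset (ρ w)
  have counit_smul := congrArg φ (hρ.counit_smul w)
  rw [hs] at counit_smul
  rw [coactConv_apply_of_eq_sum hs]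
  simpa [Algebra.algebraMap_eq_smul_one] using counit_smul

theorem IsCoaction.coactConv_mul {ρ : M →ₗ[k] M ⊗[k] C} (hρ : IsCoaction ρ) (φ : M →ₗ[k] R)
    (u v : WithConv (C →ₗ[k] R)) :
    coactConv ρ φ (u * v) = coactConv ρ (coactConv ρ φ u) v := by
  let F : M ⊗[k] (C ⊗[k] C) →ₗ[k] R :=
    LinearMap.mul' k R ∘ₗ map φ (LinearMap.mul' k R ∘ₗ map u.ofConv v.ofConv)
  have F_assoc (t : M ⊗[k] C) (c : C) : F (TensorProduct.assoc k M C C (t ⊗ₜ c)) =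
      LinearMap.mul' k R (map φ u.ofConv t) * v c := by
    induction t with
    | zero => simp
    | add s t hs ht => simp [add_tmul, hs, ht, add_mul]
    | tmul x y => simp [F, mul_assoc]
  ext w
  obtain ⟨s, hs⟩ := exists_finset (ρ w)
  have coassoc := congrArg F (hρ.coassoc w)
  rw [coactConv_apply_of_eq_sum hs, coactConv_apply_of_eq_sum hs]
  simp only [hs, map_sum, LinearMap.rTensor_tmul, F_assoc] at coassoc
  simpa [F, coactConv, LinearMap.convMul_apply] using coassoc.symm

end Coaction

section HeadRevProd

variable {m : ℕ}

/-- The product `x₀ x_m ⋯ x₁`, the order in which the factors of `U(h₀, …, h_m)` appear. -/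
def headRevProd {R : Type*} [Monoid R] (x : Fin (m + 1) → R) : R :=
  x 0 * (List.ofFn fun j : Fin m => x j.succ).reverse.prod

-- Negation in `Fin (m + 1)` fixes `0` and reverses the other indices.
theorem headRevProd_eq_prod_neg {R : Type*} [Monoid R] (x : Fin (m + 1) → R) :
    headRevProd x = (List.ofFn fun j => x (-j)).prod := by
  have neg_succ (j : Fin m) : -j.succ = (Fin.rev j).succ := by
    ext
    simp only [Fin.val_neg, Fin.succ_ne_zero, if_false, Fin.val_succ, Fin.val_rev]
    omega
  have reverse_ofFn : (List.ofFn fun j : Fin m => x j.succ).reverse =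
      List.ofFn fun j : Fin m => x (Fin.rev j).succ :=
    List.ext_getElem (by simp) fun i _ _ => by simp [Fin.rev, Nat.sub_sub, add_comm 1 i]
  simp [headRevProd, List.ofFn_succ, neg_succ, reverse_ofFn]

theorem map_headRevProd {R R' : Type*} [Monoid R] [Monoid R'] (F : R →* R')
    (x : Fin (m + 1) → R) : F (headRevProd x) = headRevProd fun j => F (x j) := by
  simp [headRevProd, map_list_prod, List.map_ofFn, Function.comp_def]

theorem headRevProd_sum {R ι : Type*} [Semiring R] (s : Fin (m + 1) → Finset ι)
    (x : Fin (m + 1) → ι → R) :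
    headRevProd (fun j => ∑ i ∈ s j, x j i) =
      ∑ p ∈ Fintype.piFinset s, headRevProd fun j => x j (p j) := by
  classical
  simp_rw [headRevProd_eq_prod_neg]
  exact ((MultilinearMap.mkPiAlgebraFin ℕ (m + 1) R).domDomCongr (Equiv.neg _)).map_sum_finset x s

theorem headRevProd_tmul {k R R' : Type*} [CommSemiring k] [Semiring R] [Algebra k R]
    [Semiring R'] [Algebra k R'] (x : Fin (m + 1) → R) (y : Fin (m + 1) → R') :
    headRevProd (fun j => x j ⊗ₜ[k] y j) = headRevProd x ⊗ₜ headRevProd y := by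
  have list_prod_tmul (L : List (Fin (m + 1))) : (L.map fun j => x (-j) ⊗ₜ[k] y (-j)).prod =
      (L.map fun j => x (-j)).prod ⊗ₜ (L.map fun j => y (-j)).prod := by
    induction L with
    | nil => simp [Algebra.TensorProduct.one_def]
    | cons j L ih => simp [ih]
  simp only [headRevProd_eq_prod_neg, List.ofFn_eq_map, list_prod_tmul]

end HeadRevProd

section Cleft

open Algebra.TensorProduct (includeLeft includeRight)

variable {k E H : Type*} [CommSemiring k] [Semiring E] [Algebra k E] [Semiring H]
  [HopfAlgebra k H]

/-- The product `W(h₀, …, h_m) = γ(h₀) γ'(h_m) ⋯ γ'(h₁)`. -/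
noncomputable def cleftWord (γ γ' : WithConv (H →ₗ[k] E)) {m : ℕ} (h : Fin (m + 1) → H) : E :=
  headRevProd (Fin.cons (γ (h 0)) fun j => γ' (h j.succ))

/-- An `H`-cleft comodule algebra: a colinear `γ : H → E` with a left convolution inverse `γ'`
such that `ν(γ'(h)) = γ'(h⁽²⁾) ⊗ S(h⁽¹⁾)`. The identities for
`ν ∘ γ` and `ν ∘ γ'` are stated in the convolution ring of maps `H → E ⊗ H`. -/
structure IsCleft (ν : E →ₐ[k] E ⊗[k] H) (γ γ' : WithConv (H →ₗ[k] E)) : Prop where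
  isCoaction : IsCoaction ν.toLinearMap
  coact_section : convMap ν γ = convMap includeLeft γ * convMap includeRight (toConv .id)
  coact_inv : convMap ν γ' = convMap includeRight (toConv (antipode k)) * convMap includeLeft γ'
  inv_mul : γ' * γ = 1

variable {ν : E →ₐ[k] E ⊗[k] H} {γ γ' : WithConv (H →ₗ[k] E)}

theorem IsCleft.coact_coactConv_inv (hν : IsCleft ν γ γ') (w : E) :
    ν (coactConv ν.toLinearMap .id γ' w) = coactConv ν.toLinearMap .id γ' w ⊗ₜ 1 := by
  have coact_eq : ν.toLinearMap = coactConv ν.toLinearMap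
      (includeLeft : E →ₐ[k] E ⊗[k] H).toLinearMap (convMap includeRight (toConv .id)) := by
    ext w
    obtain ⟨s, hs⟩ := exists_finset (ν w)
    rw [coactConv_apply_of_eq_sum hs]
    simp [hs]
  have comp_eq : ν.toLinearMap ∘ₗ coactConv ν.toLinearMap .id γ' =
      (includeLeft : E →ₐ[k] E ⊗[k] H).toLinearMap ∘ₗ coactConv ν.toLinearMap .id γ' := by
    rw [algHom_comp_coactConv, algHom_comp_coactConv, LinearMap.comp_id, LinearMap.comp_id]
    nth_rw 2 [coact_eq]
    rw [← hν.isCoaction.coactConv_mul, hν.coact_inv, ← mul_assoc, ← map_mul,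
      LinearMap.id_mul_antipode, map_one, one_mul]
  exact congr($comp_eq w)

theorem IsCleft.coactConv_coactConv_inv (hν : IsCleft ν γ γ') :
    coactConv ν.toLinearMap (coactConv ν.toLinearMap .id γ') γ = .id := by
  rw [← hν.isCoaction.coactConv_mul, hν.inv_mul, hν.isCoaction.coactConv_one]

theorem IsCleft.coact_cleftWord (hν : IsCleft ν γ γ') {m : ℕ} {ι : Type*} {h : Fin (m + 1) → H}
    (𝓡 : ∀ j, Repr k (h j) ι) :
    ν (cleftWord γ γ' h) = ∑ p ∈ Fintype.piFinset fun j => (𝓡 j).index,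
      cleftWord γ γ'
          (Fin.cons ((𝓡 0).left (p 0)) fun j : Fin m => (𝓡 j.succ).right (p j.succ)) ⊗ₜ
        ((𝓡 0).right (p 0) *
          antipode k (List.ofFn fun j : Fin m => (𝓡 j.succ).left (p j.succ)).prod) := by
  have coact_section : ν (γ (h 0)) = ∑ i ∈ (𝓡 0).index, γ ((𝓡 0).left i) ⊗ₜ (𝓡 0).right i :=
    congr($hν.coact_section (h 0)).trans (((𝓡 0).convMul_apply _ _).trans (by simp))
  have coact_inv (j : Fin m) : ν (γ' (h j.succ)) = ∑ i ∈ (𝓡 j.succ).index,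
      γ' ((𝓡 j.succ).right i) ⊗ₜ antipode k ((𝓡 j.succ).left i) :=
    congr($hν.coact_inv (h j.succ)).trans (((𝓡 j.succ).convMul_apply _ _).trans (by simp))
  let y (j : Fin (m + 1)) (i : ι) : E :=
    Fin.cons (α := fun _ => E) (γ ((𝓡 0).left i)) (fun j => γ' ((𝓡 j.succ).right i)) j
  let z (j : Fin (m + 1)) (i : ι) : H :=
    Fin.cons (α := fun _ => H) ((𝓡 0).right i) (fun j => antipode k ((𝓡 j.succ).left i)) j
  have coact_factor (j : Fin (m + 1)) :
      ν ((Fin.cons (γ (h 0)) fun j => γ' (h j.succ) : Fin (m + 1) → E) j) =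
        ∑ i ∈ (𝓡 j).index, y j i ⊗ₜ z j i := by
    cases j using Fin.cases with
    | zero => exact coact_section
    | succ j => exact coact_inv j
  rw [cleftWord]
  refine (map_headRevProd (ν : E →* E ⊗[k] H) _).trans ?_
  simp only [MonoidHom.coe_coe, coact_factor, headRevProd_sum, headRevProd_tmul]
  simp [y, z, cleftWord, headRevProd, antipode_list_prod, List.map_ofFn, Function.comp_def]

end Cleft

section CrossedMap

variable {k A H C D : Type*} [CommSemiring k] [Semiring A] [Algebra k A]
  [AddCommMonoid H] [Module k H] [Coalgebra k H] [AddCommMonoid C] [Module k C] [Coalgebra k C]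
  [AddCommMonoid D] [Module k D] [Coalgebra k D]

/-- The map `g # ρ : x ↦ g(x⁽¹⁾) ⊗ ρ(x⁽²⁾)`. -/
noncomputable def crossedMap (g : WithConv (C →ₗ[k] A)) (ρ : C →ₗc[k] H) : C →ₗ[k] A ⊗[k] H :=
  map g.ofConv ρ.toLinearMap ∘ₗ comul

theorem crossedMap_eq_sum {ι : Type*} {x : C} (𝓡 : Repr k x ι)
    (g : WithConv (C →ₗ[k] A)) (ρ : C →ₗc[k] H) :
    crossedMap g ρ x = ∑ i ∈ 𝓡.index, g (𝓡.left i) ⊗ₜ ρ (𝓡.right i) := by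
  simp [crossedMap, ← 𝓡.eq]

theorem crossedMap_comp (g : WithConv (D →ₗ[k] A)) (ρ : D →ₗc[k] H) (κ : C →ₗc[k] D) (x : C) :
    crossedMap g ρ (κ x) = crossedMap (convComap κ g) (ρ.comp κ) x := by
  rw [crossedMap_eq_sum ((ℛ k x).induced κ), crossedMap_eq_sum (ℛ k x)]
  rfl

theorem crossedMap_mul_eq_sum {ι : Type*} {x : C} (𝓡 : Repr k x ι)
    (u v : WithConv (C →ₗ[k] A)) (ρ : C →ₗc[k] H) :
    crossedMap (u * v) ρ x = ∑ i ∈ 𝓡.index, u (𝓡.left i) • crossedMap v ρ (𝓡.right i) := by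
  have mul_left (i : ι) := (ℛ k (𝓡.left i)).convMul_apply u v
  have crossedMap_right (i : ι) := crossedMap_eq_sum (ℛ k (𝓡.right i)) v ρ
  have coassoc := congrArg (map (LinearMap.mul' k A ∘ₗ map u.ofConv v.ofConv) ρ.toLinearMap ∘ₗ
    (TensorProduct.assoc k C C C).symm.toLinearMap)
    (Coalgebra.sum_tmul_tmul_eq 𝓡 (fun i => ℛ k (𝓡.left i)) (fun i => ℛ k (𝓡.right i)))
  rw [crossedMap_eq_sum 𝓡]
  simpa [mul_left, crossedMap_right, sum_tmul, Finset.smul_sum, smul_tmul',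
    -LinearMap.convMul_apply] using coassoc

theorem crossedMap_toSpanSingleton_counit (a : A) (ρ : C →ₗc[k] H) (x : C) :
    crossedMap (toConv (LinearMap.toSpanSingleton k A a ∘ₗ counit)) ρ x = a ⊗ₜ ρ x := by
  have counit_smul : ∑ i ∈ (ℛ k x).index,
      counit (R := k) ((ℛ k x).left i) • ρ ((ℛ k x).right i) = ρ x := by
    simp_rw [← map_smul, ← map_sum, Coalgebra.sum_counit_smul]
  simp [crossedMap_eq_sum (ℛ k x), smul_tmul, ← tmul_sum, counit_smul, -tmul_smul]

theorem crossedMap_one (ρ : C →ₗc[k] H) (x : C) :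
    crossedMap (1 : WithConv (C →ₗ[k] A)) ρ x = 1 ⊗ₜ ρ x := by
  have one_eq : (1 : WithConv (C →ₗ[k] A)) =
      toConv (LinearMap.toSpanSingleton k A 1 ∘ₗ counit) := by
    ext
    simp [Algebra.algebraMap_eq_smul_one]
  rw [one_eq, crossedMap_toSpanSingleton_counit]

theorem crossedMap_convComap_fst_mul {ι : Type*} {x : C} (𝓡 : Repr k x ι)
    (g : WithConv (C →ₗ[k] A)) (w : WithConv (C ⊗[k] D →ₗ[k] A)) (ρ : C ⊗[k] D →ₗc[k] H) (y : D) :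
    crossedMap (convComap (fstCoalgHom k C D) g * w) ρ (x ⊗ₜ y) =
      ∑ i ∈ 𝓡.index, g (𝓡.left i) • crossedMap w ρ (𝓡.right i ⊗ₜ y) := by
  rw [crossedMap_mul_eq_sum (tmulRepr 𝓡 (ℛ k y))]
  have counit_smul (a : A) (x : C) : ∑ j ∈ (ℛ k y).index,
      counit (R := k) ((ℛ k y).left j) • a • crossedMap w ρ (x ⊗ₜ (ℛ k y).right j) =
      a • crossedMap w ρ (x ⊗ₜ y) := by
    simp_rw [smul_comm _ a, ← Finset.smul_sum, ← map_smul, ← map_sum, ← tmul_smul, ← tmul_sum,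
      Coalgebra.sum_counit_smul]
  simp [Finset.sum_product, convComap_apply, counit_smul]

end CrossedMap

section CanonicalCoaction

variable {k A H C : Type*} [CommRing k] [Ring A] [Algebra k A] [Ring H] [HopfAlgebra k H]
  [AddCommMonoid C] [Module k C] [Coalgebra k C]

theorem nuE_tmul {ι : Type*} {h : H} (𝓡 : Repr k h ι) (a : A) :
    nuE k A H (a ⊗ₜ h) = ∑ i ∈ 𝓡.index, (a ⊗ₜ 𝓡.left i) ⊗ₜ 𝓡.right i := by
  simp [nuE, ← 𝓡.eq, tmul_sum]

theorem nuE_oneE : nuE k A H (oneE k A H) = oneE k A H ⊗ₜ 1 := by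
  simp [oneE, nuE_tmul (oneRepr k H)]

theorem rTensor_counit_nuE (x : A ⊗[k] H) : LinearMap.rTensor H
    ((TensorProduct.rid k A).toLinearMap ∘ₗ LinearMap.lTensor A counit) (nuE k A H x) = x := by
  induction x with
  | zero => simp
  | add x y hx hy => simp only [map_add, hx, hy]
  | tmul a h =>
    simp [nuE_tmul (ℛ k h), smul_tmul, ← tmul_sum, Coalgebra.sum_counit_smul, -tmul_smul]

theorem exists_eq_tmul_one_of_nuE_eq {x : A ⊗[k] H} (hx : nuE k A H x = x ⊗ₜ 1) :
    ∃ a : A, x = a ⊗ₜ 1 :=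
  ⟨_, (rTensor_counit_nuE x).symm.trans (by rw [hx, LinearMap.rTensor_tmul])⟩

theorem nuE_crossedMap (g : WithConv (C →ₗ[k] A)) (ρ : C →ₗc[k] H) (x : C) :
    nuE k A H (crossedMap g ρ x) = map (crossedMap g ρ) ρ.toLinearMap (comul x) := by
  have coassoc := congrArg ((TensorProduct.assoc k A H H).symm.toLinearMap ∘ₗ
    map g.ofConv (map ρ.toLinearMap ρ.toLinearMap))
    (Coalgebra.sum_tmul_tmul_eq (ℛ k x) (fun i => ℛ k _) (fun i => ℛ k _))
  have nuE_tmul_map (a : A) (y : C) : nuE k A H (a ⊗ₜ ρ y) =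
      ∑ i ∈ (ℛ k y).index, (a ⊗ₜ ρ ((ℛ k y).left i)) ⊗ₜ ρ ((ℛ k y).right i) :=
    nuE_tmul ((ℛ k y).induced ρ) a
  have crossedMap_left i := crossedMap_eq_sum (ℛ k ((ℛ k x).left i)) g ρ
  rw [crossedMap_eq_sum (ℛ k x)]
  conv_rhs => rw [← (ℛ k x).eq]
  simpa [nuE_tmul_map, crossedMap_left, sum_tmul] using coassoc.symm

theorem gammaInv_eq_sum (finv : H →ₗ[k] H →ₗ[k] A) {ι : Type*} {h : H} (𝓡 : Repr k h ι) :
    gammaInv k A H finv h = ∑ i ∈ 𝓡.index,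
      lift finv (map (antipode k) .id (comul (𝓡.right i))) ⊗ₜ antipode k (𝓡.left i) := by
  simp [gammaInv, ← 𝓡.eq, LinearMap.rTensor]

theorem nuE_gammaInv (finv : H →ₗ[k] H →ₗ[k] A) {ι : Type*} {h : H} (𝓡 : Repr k h ι) :
    nuE k A H (gammaInv k A H finv h) =
      ∑ i ∈ 𝓡.index, gammaInv k A H finv (𝓡.right i) ⊗ₜ antipode k (𝓡.left i) := by
  have coassoc := congrArg ((TensorProduct.comm k H (A ⊗[k] H)).toLinearMap ∘ₗ
    map (antipode k) ((TensorProduct.comm k H A).toLinearMap ∘ₗ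
      map (antipode k) (lift finv ∘ₗ map (antipode k) .id ∘ₗ comul)))
    (Coalgebra.sum_tmul_tmul_eq 𝓡 (fun i => ℛ k (𝓡.left i)) (fun i => ℛ k (𝓡.right i)))
  have nuE_tmul_antipode (a : A) (x : H) : nuE k A H (a ⊗ₜ antipode k x) = ∑ j ∈ (ℛ k x).index,
      (a ⊗ₜ antipode k ((ℛ k x).right j)) ⊗ₜ antipode k ((ℛ k x).left j) :=
    nuE_tmul (antipodeRepr (ℛ k x)) a
  have gammaInv_right (i : ι) := gammaInv_eq_sum finv (ℛ k (𝓡.right i))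
  simpa [gammaInv_eq_sum finv 𝓡, nuE_tmul_antipode, gammaInv_right, sum_tmul] using coassoc

end CanonicalCoaction

section CrossedMul

variable {k A H C D : Type*} [CommRing k] [Ring A] [Algebra k A] [Ring H] [HopfAlgebra k H]
  [AddCommMonoid C] [Module k C] [AddCommMonoid D] [Module k D]

/-- The map `h ⊗ x ↦ g(x)^h` on `H ⊗ C`, for `g : C → A`. -/
noncomputable def actConv (σ : H →ₗ[k] A →ₗ[k] A) (g : WithConv (C →ₗ[k] A)) :
    WithConv (H ⊗[k] C →ₗ[k] A) :=
  toConv (lift (σ.compl₂ g.ofConv))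

@[simp]
theorem actConv_tmul (σ : H →ₗ[k] A →ₗ[k] A) (g : WithConv (C →ₗ[k] A)) (h : H) (x : C) :
    actConv σ g (h ⊗ₜ x) = σ h (g x) := rfl

variable [Coalgebra k C] [Coalgebra k D]

theorem crossedMul_tmul_tmul (σ : H →ₗ[k] A →ₗ[k] A) (f : H →ₗ[k] H →ₗ[k] A) {ι : Type*}
    {h : H} (𝓡 : Repr k h ι) (a b : A) (l : H) :
    crossedMul k A H σ f (a ⊗ₜ h) (b ⊗ₜ l) = a • ∑ i ∈ 𝓡.index, σ (𝓡.left i) b •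
      crossedMap (toConv (lift f)) (Bialgebra.mulCoalgHom k H) (𝓡.right i ⊗ₜ[k] l) := by
  have coassoc (l₁ l₂ : H) := congrArg (a • map (LinearMap.mul' k A ∘ₗ map (σ.flip b) (f.flip l₁))
    (LinearMap.mulRight k l₂) ∘ₗ (TensorProduct.assoc k H H H).symm.toLinearMap)
    (Coalgebra.sum_tmul_tmul_eq 𝓡 (fun i => ℛ k (𝓡.left i)) (fun i => ℛ k (𝓡.right i)))
  simp only [map_sum, LinearMap.smul_apply, LinearMap.comp_apply, LinearEquiv.coe_coe,
    assoc_symm_tmul, map_tmul, LinearMap.mul'_apply, LinearMap.flip_apply,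
    LinearMap.mulRight_apply, smul_tmul', smul_eq_mul] at coassoc
  have comul_left (i : ι) := (ℛ k (𝓡.left i)).eq
  have crossedMap_right (i : ι) := crossedMap_eq_sum
    (tmulRepr (ℛ k (𝓡.right i)) (ℛ k l)) (toConv (lift f)) (Bialgebra.mulCoalgHom k H)
  simp only [crossedMul, lift.tmul, LinearMap.compl₂_apply, LinearMap.comp_apply, curry_apply,
    LinearMap.llcomp_apply, LinearMap.lTensor_tmul, map_tmul, LinearEquiv.coe_coe]
  rw [← 𝓡.eq, ← (ℛ k l).eq]
  simp only [crossedMap_right, map_sum, LinearMap.rTensor_tmul, ← comul_left]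
  simp only [sum_tmul, tmul_sum, map_sum, assoc_symm_tmul, tensorTensorTensorComm_tmul,
    LinearMap.rTensor_tmul, LinearEquiv.coe_coe, map_tmul, lift.tmul, LinearMap.mul'_apply,
    coassoc, tmulRepr_index, tmulRepr_left, tmulRepr_right, Bialgebra.coe_mulCoalgHom,
    Finset.sum_product, Finset.smul_sum, smul_tmul', smul_eq_mul]
  rw [Finset.sum_comm]
  exact Finset.sum_congr rfl fun i _ => Finset.sum_comm

theorem crossedMul_crossedMap (σ : H →ₗ[k] A →ₗ[k] A) (f : H →ₗ[k] H →ₗ[k] A)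
    (g : WithConv (C →ₗ[k] A)) (ρ : C →ₗc[k] H) (g' : WithConv (D →ₗ[k] A)) (ρ' : D →ₗc[k] H)
    (x : C) (y : D) :
    crossedMul k A H σ f (crossedMap g ρ x) (crossedMap g' ρ' y) =
      crossedMap (convComap (fstCoalgHom k C D) g *
          (convComap (Coalgebra.TensorProduct.map ρ (CoalgHom.id k D)) (actConv σ g') *
            convComap (Coalgebra.TensorProduct.map ρ ρ') (toConv (lift f))))
        ((Bialgebra.mulCoalgHom k H).comp (Coalgebra.TensorProduct.map ρ ρ')) (x ⊗ₜ y) := by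
  rw [crossedMap_convComap_fst_mul (ℛ k x), crossedMap_eq_sum (ℛ k x), crossedMap_eq_sum (ℛ k y)]
  simp_rw [map_sum, LinearMap.sum_apply]
  rw [Finset.sum_comm]
  refine Finset.sum_congr rfl fun i _ => ?_
  have crossedMul_summand (j : D × D) := crossedMul_tmul_tmul σ f
    ((ℛ k ((ℛ k x).right i)).induced ρ) (g ((ℛ k x).left i)) (g' ((ℛ k y).left j))
    (ρ' ((ℛ k y).right j))
  refine (Finset.sum_congr rfl fun j _ => crossedMul_summand j).trans ?_
  rw [crossedMap_mul_eq_sum (tmulRepr (ℛ k _) (ℛ k y)), ← Finset.smul_sum, Finset.sum_comm]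
  simp only [tmulRepr_index, Finset.sum_product]
  refine congrArg _ (Finset.sum_congr rfl fun p _ => Finset.sum_congr rfl fun j _ => ?_)
  exact congrArg (σ (ρ _) (g' _) • ·) (crossedMap_comp (toConv (lift f))
    (Bialgebra.mulCoalgHom k H) (Coalgebra.TensorProduct.map ρ ρ')
    ((ℛ k ((ℛ k x).right i)).right p ⊗ₜ (ℛ k y).right j))

theorem nuE_crossedMul_tmul_tmul (σ : H →ₗ[k] A →ₗ[k] A) (f : H →ₗ[k] H →ₗ[k] A) {ι κ : Type*}
    {h l : H} (𝓡 : Repr k h ι) (𝓢 : Repr k l κ) (a b : A) :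
    nuE k A H (crossedMul k A H σ f (a ⊗ₜ h) (b ⊗ₜ l)) =
      ∑ i ∈ 𝓡.index, ∑ j ∈ 𝓢.index, crossedMul k A H σ f (a ⊗ₜ 𝓡.left i) (b ⊗ₜ 𝓢.left j) ⊗ₜ
        (𝓡.right i * 𝓢.right j) := by
  have crossedMul_eq (x y : H) := crossedMul_crossedMap σ f
    (toConv (LinearMap.toSpanSingleton k A a ∘ₗ counit)) (.id k H)
    (toConv (LinearMap.toSpanSingleton k A b ∘ₗ counit)) (.id k H) x y
  simp only [crossedMap_toSpanSingleton_counit, CoalgHom.id_apply] at crossedMul_eq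
  rw [crossedMul_eq, nuE_crossedMap, ← (tmulRepr 𝓡 𝓢).eq]
  simp [crossedMul_eq, coalgHom_map_id, Finset.sum_product]

end CrossedMul

section CrossedSystem

variable {k A H C : Type*} [CommRing k] [Ring A] [Algebra k A] [Ring H] [HopfAlgebra k H]
  [AddCommMonoid C] [Module k C] [Coalgebra k C]

/-- A weak action `σ` with a cocycle `f` satisfying conditions (i)–(iii), expressed in the
convolution rings of `H`, `H ⊗ H` and `(H ⊗ H) ⊗ H`, without reference to a choice of Sweedler
representation. -/
structure IsCrossedSystem (σ : H →ₗ[k] A →ₗ[k] A) (f : H →ₗ[k] H →ₗ[k] A) : Prop where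
  act_mul (a b : A) : toConv (σ.flip (a * b)) = toConv (σ.flip a) * toConv (σ.flip b)
  act_one : toConv (σ.flip 1) = 1
  one_act (a : A) : σ 1 a = a
  cocycle_one_right : toConv (f.flip 1) = 1
  cocycle_one_left : toConv (f 1) = 1
  cocycle_assoc :
    convComap (Coalgebra.TensorProduct.assoc k k H H H).toCoalgHom
        (actConv σ (toConv (lift f)) *
          convComap (Coalgebra.TensorProduct.map (CoalgHom.id k H) (Bialgebra.mulCoalgHom k H))
            (toConv (lift f))) =
      convComap (fstCoalgHom k (H ⊗[k] H) H) (toConv (lift f)) *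
        convComap (Coalgebra.TensorProduct.map (Bialgebra.mulCoalgHom k H) (CoalgHom.id k H))
          (toConv (lift f))
  act_act (a : A) : actConv σ (toConv (σ.flip a)) * toConv (lift f) =
    toConv (lift f) * convComap (Bialgebra.mulCoalgHom k H) (toConv (σ.flip a))

variable {n : H → ℕ} {c₁ c₂ : H → ℕ → H} {σ : H →ₗ[k] A →ₗ[k] A} {f finv : H →ₗ[k] H →ₗ[k] A}

/-- The Mathlib representation of `Δ(h)` given by a Sweedler representation. -/
def IsSweedlerRep.repr (hrep : IsSweedlerRep k H n c₁ c₂) (h : H) : Repr k h ℕ :=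
  ⟨Finset.range (n h), c₁ h, c₂ h, (hrep h).symm⟩

theorem IsSweedlerRep.isCrossedSystem (hrep : IsSweedlerRep k H n c₁ c₂)
    (hweak : IsWeakAction k A H n c₁ c₂ σ) (hnormal : IsNormal k A H f)
    (hcocycle : IsCocycle k A H n c₁ c₂ σ f) (htwisted : IsTwistedModule k A H n c₁ c₂ σ f) :
    IsCrossedSystem σ f where
  act_mul a b := by
    ext h
    exact (hweak.1 h a b).trans
      ((hrep.repr h).convMul_apply (toConv (σ.flip a)) (toConv (σ.flip b))).symm
  act_one := by
    ext h
    exact (hweak.2.1 h).trans (Algebra.algebraMap_eq_smul_one _).symm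
  one_act := hweak.2.2
  cocycle_one_right := by
    ext h
    exact (hnormal h).1.trans (Algebra.algebraMap_eq_smul_one _).symm
  cocycle_one_left := by
    ext h
    exact (hnormal h).2.trans (Algebra.algebraMap_eq_smul_one _).symm
  cocycle_assoc := by
    ext h l m
    have counit_smul_f (a : A) (x : H) :
        ∑ p ∈ Finset.range (n m), counit (R := k) (c₁ m p) • (a * f x (c₂ m p)) = a * f x m := by
      simp_rw [← mul_smul_comm, ← map_smul, ← Finset.mul_sum, ← map_sum]
      exact congrArg (a * f x ·) (Coalgebra.sum_counit_smul (hrep.repr m))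
    let 𝓡 := hrep.repr h
    let 𝓢 := hrep.repr l
    let 𝓣 := hrep.repr m
    refine ((tmulRepr 𝓡 (tmulRepr 𝓢 𝓣)).convMul_apply _ _).trans
      (Eq.trans ?_ ((tmulRepr (tmulRepr 𝓡 𝓢) 𝓣).convMul_apply _ _).symm)
    simpa [Finset.sum_product, convComap_apply, 𝓡, 𝓢, 𝓣, IsSweedlerRep.repr, counit_smul_f]
      using hcocycle h l m
  act_act a := by
    ext h l
    refine ((tmulRepr (hrep.repr h) (hrep.repr l)).convMul_apply _ _).trans
      (Eq.trans ?_ ((tmulRepr (hrep.repr h) (hrep.repr l)).convMul_apply _ _).symm)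
    simpa [Finset.sum_product, convComap_apply, IsSweedlerRep.repr] using htwisted h l a

theorem IsConvInverse.toConv_mul
    (hinv : IsConvInverse k A H n c₁ c₂ f finv) (hrep : IsSweedlerRep k H n c₁ c₂) :
    toConv (lift finv) * toConv (lift f) = 1 := by
  ext h l
  refine ((tmulRepr (hrep.repr h) (hrep.repr l)).convMul_apply _ _).trans ?_
  simpa [Finset.sum_product, IsSweedlerRep.repr, Algebra.algebraMap_eq_smul_one, mul_comm]
    using (hinv h l).2

theorem IsCrossedSystem.actConv_mul
    (hf : IsCrossedSystem σ f) (u v : WithConv (C →ₗ[k] A)) :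
    actConv σ (u * v) = actConv σ u * actConv σ v := by
  have act_mul (h : H) (a b : A) : σ h (a * b) =
      ∑ i ∈ (ℛ k h).index, σ ((ℛ k h).left i) a * σ ((ℛ k h).right i) b :=
    congr($(hf.act_mul a b) h).trans ((ℛ k h).convMul_apply _ _)
  ext h x
  refine Eq.trans ?_ ((tmulRepr (ℛ k h) (ℛ k x)).convMul_apply _ _).symm
  simp only [AlgebraTensorModule.curry_apply, curry_apply, LinearMap.restrictScalars_apply,
    actConv_tmul, (ℛ k x).convMul_apply u v, map_sum, act_mul]
  simpa [Finset.sum_product] using Finset.sum_comm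

theorem IsCrossedSystem.actConv_actConv
    (hf : IsCrossedSystem σ f) (g : WithConv (H →ₗ[k] A)) :
    convComap (Coalgebra.TensorProduct.assoc k k H H H).toCoalgHom (actConv σ (actConv σ g)) *
        convComap (fstCoalgHom k (H ⊗[k] H) H) (toConv (lift f)) =
      convComap (fstCoalgHom k (H ⊗[k] H) H) (toConv (lift f)) *
        convComap (Coalgebra.TensorProduct.map (Bialgebra.mulCoalgHom k H) (CoalgHom.id k H))
          (actConv σ g) := by
  ext h l m
  have collapse_left (T : H →ₗ[k] A) (b : A) : ∑ p ∈ (ℛ k m).index,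
      counit (R := k) ((ℛ k m).right p) • (T ((ℛ k m).left p) * b) = T m * b := by
    simp_rw [← smul_mul_assoc, ← Finset.sum_mul, ← map_smul, ← map_sum, sum_counit_right_smul]
  have collapse_right (T : H →ₗ[k] A) (b : A) : ∑ p ∈ (ℛ k m).index,
      counit (R := k) ((ℛ k m).left p) • (b * T ((ℛ k m).right p)) = b * T m := by
    simp_rw [← mul_smul_comm, ← Finset.mul_sum, ← map_smul, ← map_sum, Coalgebra.sum_counit_smul]
  have act_act := congr($(hf.act_act (g m)) (h ⊗ₜ l))
  refine ((tmulRepr (tmulRepr (ℛ k h) (ℛ k l)) (ℛ k m)).convMul_apply _ _).trans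
      (Eq.trans ?_ ((tmulRepr (tmulRepr (ℛ k h) (ℛ k l)) (ℛ k m)).convMul_apply _ _).symm)
  rw [(tmulRepr (ℛ k h) (ℛ k l)).convMul_apply, (tmulRepr (ℛ k h) (ℛ k l)).convMul_apply] at act_act
  have counit_left (i j) := collapse_left (σ ((ℛ k h).left i) ∘ₗ σ ((ℛ k l).left j) ∘ₗ g.ofConv)
  have counit_right (i j) := collapse_right (σ ((ℛ k h).right i * (ℛ k l).right j) ∘ₗ g.ofConv)
  simp only [LinearMap.comp_apply] at counit_left counit_right
  simp only [tmulRepr_index, tmulRepr_left, actConv_tmul, LinearMap.flip_apply, tmulRepr_right,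
    lift.tmul, Finset.sum_product, convComap_apply, Bialgebra.coe_mulCoalgHom,
    LinearMap.mul'_apply] at act_act
  simp [Finset.sum_product, convComap_apply, counit_left, counit_right, act_act]

theorem IsCrossedSystem.crossedMul_crossedMap_assoc (hf : IsCrossedSystem σ f)
    (u v w : WithConv (H →ₗ[k] A)) (h l m : H) :
    crossedMul k A H σ f
        (crossedMul k A H σ f (crossedMap u (.id k H) h) (crossedMap v (.id k H) l))
        (crossedMap w (.id k H) m) =
      crossedMul k A H σ f (crossedMap u (.id k H) h)
        (crossedMul k A H σ f (crossedMap v (.id k H) l) (crossedMap w (.id k H) m)) := by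
  have fst_assoc : convComap (Coalgebra.TensorProduct.assoc k k H H H).toCoalgHom
      (convComap (fstCoalgHom k H (H ⊗[k] H)) u) =
      convComap (fstCoalgHom k (H ⊗[k] H) H) (convComap (fstCoalgHom k H H) u) := by
    ext
    simp [convComap_apply, mul_smul]
  have act_fst_assoc : convComap (Coalgebra.TensorProduct.assoc k k H H H).toCoalgHom
      (actConv σ (convComap (fstCoalgHom k H H) v)) =
      convComap (fstCoalgHom k (H ⊗[k] H) H) (actConv σ v) := by
    ext
    simp [convComap_apply]
  have mulCoalgHom_assoc : (Bialgebra.mulCoalgHom k H).comp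
        (Coalgebra.TensorProduct.map (Bialgebra.mulCoalgHom k H) (CoalgHom.id k H)) =
      ((Bialgebra.mulCoalgHom k H).comp (Coalgebra.TensorProduct.map (CoalgHom.id k H)
        (Bialgebra.mulCoalgHom k H))).comp
          (Coalgebra.TensorProduct.assoc k k H H H).toCoalgHom :=
    CoalgHom.coe_linearMap_injective (TensorProduct.ext_threefold fun x y z => mul_assoc x y z)
  have assoc_apply : h ⊗ₜ (l ⊗ₜ m) =
      (Coalgebra.TensorProduct.assoc k k H H H).toCoalgHom ((h ⊗ₜ l) ⊗ₜ m) := rfl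
  have cocycle_assoc := hf.cocycle_assoc
  rw [map_mul] at cocycle_assoc
  simp only [crossedMul_crossedMap, coalgHom_map_id, convComap_id, hf.actConv_mul,
    CoalgHom.comp_id]
  rw [assoc_apply, crossedMap_comp, mulCoalgHom_assoc]
  simp only [map_mul, fst_assoc, act_fst_assoc, mul_assoc, cocycle_assoc]
  rw [← mul_assoc (convComap _ (actConv σ (actConv σ w))), hf.actConv_actConv, mul_assoc]

theorem IsCrossedSystem.crossedMul_assoc
    (hf : IsCrossedSystem σ f) (x y z : A ⊗[k] H) :
    crossedMul k A H σ f (crossedMul k A H σ f x y) z =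
      crossedMul k A H σ f x (crossedMul k A H σ f y z) := by
  induction x with
  | zero => simp
  | add x x' hx hx' => simp [hx, hx']
  | tmul a h =>
  induction y with
  | zero => simp
  | add y y' hy hy' => simp [hy, hy']
  | tmul b l =>
  induction z with
  | zero => simp
  | add z z' hz hz' => simp [hz, hz']
  | tmul c m =>
    simpa [crossedMap_toSpanSingleton_counit] using hf.crossedMul_crossedMap_assoc
      (toConv (LinearMap.toSpanSingleton k A a ∘ₗ counit))
      (toConv (LinearMap.toSpanSingleton k A b ∘ₗ counit))
      (toConv (LinearMap.toSpanSingleton k A c ∘ₗ counit)) h l m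

theorem IsCrossedSystem.crossedMul_tmul_gam
    (hf : IsCrossedSystem σ f) (a : A) (h l : H) :
    crossedMul k A H σ f (a ⊗ₜ h) (gam k A H l) =
      a • crossedMap (toConv (lift f)) (Bialgebra.mulCoalgHom k H) (h ⊗ₜ l) := by
  have act_one (h : H) : σ h 1 = algebraMap k A (counit h) := congr($(hf.act_one) h)
  simp only [gam, mk_apply, crossedMul_tmul_tmul σ f (ℛ k h), act_one, algebraMap_smul,
    ← map_smul, ← map_sum, smul_tmul', ← sum_tmul, Coalgebra.sum_counit_smul]

theorem IsCrossedSystem.crossedMul_oneE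
    (hf : IsCrossedSystem σ f) (x : A ⊗[k] H) : crossedMul k A H σ f x (oneE k A H) = x := by
  have cocycle_one (h : H) : f h 1 = algebraMap k A (counit h) :=
    congr($(hf.cocycle_one_right) h)
  have tmul_one (h : H) :
      crossedMap (toConv (lift f)) (Bialgebra.mulCoalgHom k H) (h ⊗ₜ 1) = 1 ⊗ₜ h := by
    rw [crossedMap_eq_sum (tmulRepr (ℛ k h) (oneRepr k H))]
    simp [cocycle_one, Algebra.algebraMap_eq_smul_one, smul_tmul, ← tmul_sum,
      Coalgebra.sum_counit_smul, -tmul_smul]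
  induction x with
  | zero => simp
  | add x y hx hy => simp [hx, hy]
  | tmul a h =>
    exact (hf.crossedMul_tmul_gam a h 1).trans (by simp [tmul_one, smul_tmul'])

theorem IsCrossedSystem.oneE_crossedMul
    (hf : IsCrossedSystem σ f) (x : A ⊗[k] H) : crossedMul k A H σ f (oneE k A H) x = x := by
  have one_cocycle (h : H) : f 1 h = algebraMap k A (counit h) :=
    congr($(hf.cocycle_one_left) h)
  have one_tmul (h : H) :
      crossedMap (toConv (lift f)) (Bialgebra.mulCoalgHom k H) (1 ⊗ₜ h) = 1 ⊗ₜ h := by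
    rw [crossedMap_eq_sum (tmulRepr (oneRepr k H) (ℛ k h))]
    simp [one_cocycle, Algebra.algebraMap_eq_smul_one, smul_tmul, ← tmul_sum,
      Coalgebra.sum_counit_smul, -tmul_smul]
  induction x with
  | zero => simp
  | add x y hx hy => simp [hx, hy]
  | tmul a h =>
    simp [oneE, crossedMul_tmul_tmul σ f (oneRepr k H), one_tmul, hf.one_act, smul_tmul']

theorem IsCrossedSystem.sum_gammaInv_crossedMul_gam_eq (hf : IsCrossedSystem σ f)
    (finv : H →ₗ[k] H →ₗ[k] A) {ι : Type*} {h : H} (𝓡 : Repr k h ι) :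
    ∑ i ∈ 𝓡.index,
        crossedMul k A H σ f (gammaInv k A H finv (𝓡.left i)) (gam k A H (𝓡.right i)) =
      ∑ i ∈ 𝓡.index, crossedMap (toConv (lift finv) * toConv (lift f))
        (Bialgebra.mulCoalgHom k H) (antipode k (𝓡.left i) ⊗ₜ 𝓡.right i) := by
  let G := crossedMap (toConv (lift f)) (Bialgebra.mulCoalgHom k H)
  let T : H ⊗[k] (H ⊗[k] (H ⊗[k] H)) →ₗ[k] A ⊗[k] H :=
    lift (Algebra.lsmul k k (A ⊗[k] H)).toLinearMap ∘ₗ map (lift finv) G ∘ₗ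
      (tensorTensorTensorComm k H H H H).toLinearMap ∘ₗ
      LinearMap.rTensor _
        (map (antipode k) (antipode k) ∘ₗ (TensorProduct.comm k H H).toLinearMap) ∘ₗ
      (TensorProduct.assoc k H H (H ⊗[k] H)).symm.toLinearMap
  have T_assoc (x z : H) (t : H ⊗[k] H) : T (x ⊗ₜ TensorProduct.assoc k H H H (t ⊗ₜ z)) =
      lift finv (map (antipode k) .id t) • G (antipode k x ⊗ₜ z) := by
    induction t with
    | zero => simp
    | add s t hs ht => simp [add_tmul, tmul_add, hs, ht, add_smul]
    | tmul y z => simp [T]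
  have T_comul (x y z : H) : T (x ⊗ₜ (y ⊗ₜ comul z)) = ∑ j ∈ (ℛ k z).index,
      finv (antipode k y) ((ℛ k z).left j) • G (antipode k x ⊗ₜ (ℛ k z).right j) := by
    simp [T, ← (ℛ k z).eq, tmul_sum]
  have coassoc := congrArg T (lTensor_coassoc_apply (k := k) h)
  simp only [← 𝓡.eq, map_sum, LinearMap.rTensor_tmul] at coassoc
  simp only [← (ℛ k (𝓡.left _)).eq, sum_tmul, map_sum, assoc_tmul, LinearMap.lTensor_tmul,
    LinearMap.comp_apply, LinearEquiv.coe_coe, LinearMap.rTensor_tmul, T_assoc, T_comul] at coassoc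
  have gammaInv_left i := gammaInv_eq_sum finv (ℛ k (𝓡.left i))
  have crossedMap_antipode i := crossedMap_mul_eq_sum (tmulRepr (antipodeRepr (ℛ k (𝓡.left i)))
    (ℛ k (𝓡.right i))) (toConv (lift finv)) (toConv (lift f)) (Bialgebra.mulCoalgHom k H)
  simpa [gammaInv_left, crossedMap_antipode, hf.crossedMul_tmul_gam, Finset.sum_product]
    using coassoc

theorem IsCrossedSystem.sum_gammaInv_crossedMul_gam (hf : IsCrossedSystem σ f)
    (hinv : toConv (lift finv) * toConv (lift f) = 1) {ι : Type*} {h : H} (𝓡 : Repr k h ι) :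
    ∑ i ∈ 𝓡.index,
        crossedMul k A H σ f (gammaInv k A H finv (𝓡.left i)) (gam k A H (𝓡.right i)) =
      counit (R := k) h • oneE k A H := by
  simp [hf.sum_gammaInv_crossedMul_gam_eq, hinv, crossedMap_one, ← tmul_sum,
    HopfAlgebra.sum_antipode_mul_eq_smul, oneE]

end CrossedSystem

section CrossedProduct

variable {k A H : Type*} [CommRing k] [Ring A] [Algebra k A] [Ring H] [HopfAlgebra k H]
  {σ : H →ₗ[k] A →ₗ[k] A} {f finv : H →ₗ[k] H →ₗ[k] A}

/-- The crossed product algebra `A #_f H`: a copy of `A ⊗ H` multiplied by `crossedMul`. -/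
def CrossedProduct (_ : IsCrossedSystem σ f) := A ⊗[k] H

namespace CrossedProduct

variable (hf : IsCrossedSystem σ f)

noncomputable instance : AddCommGroup (CrossedProduct hf) :=
  inferInstanceAs (AddCommGroup (A ⊗[k] H))

noncomputable instance : Module k (CrossedProduct hf) :=
  inferInstanceAs (Module k (A ⊗[k] H))

/-- The identity map from `A ⊗ H` to the crossed product. -/
noncomputable def of : A ⊗[k] H ≃ₗ[k] CrossedProduct hf := LinearEquiv.refl k _

noncomputable instance : Ring (CrossedProduct hf) where
  __ : AddCommGroup (CrossedProduct hf) := inferInstance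
  mul x y := of hf (crossedMul k A H σ f ((of hf).symm x) ((of hf).symm y))
  one := of hf (oneE k A H)
  mul_assoc := hf.crossedMul_assoc
  one_mul := hf.oneE_crossedMul
  mul_one := hf.crossedMul_oneE
  left_distrib x := (crossedMul k A H σ f x).map_add
  right_distrib := LinearMap.map_add₂ (crossedMul k A H σ f)
  zero_mul := LinearMap.map_zero₂ (crossedMul k A H σ f)
  mul_zero x := (crossedMul k A H σ f x).map_zero

noncomputable instance : Algebra k (CrossedProduct hf) :=
  Algebra.ofModule (LinearMap.map_smul₂ (crossedMul k A H σ f))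
    fun r x => (crossedMul k A H σ f x).map_smul r

theorem of_crossedMul (x y : A ⊗[k] H) :
    of hf (crossedMul k A H σ f x y) = of hf x * of hf y := rfl

theorem of_oneE : of hf (oneE k A H) = 1 := rfl

theorem of_prodE (L : List (A ⊗[k] H)) : of hf (prodE k A H σ f L) = (L.map (of hf)).prod := by
  induction L with
  | nil => rfl
  | cons x L ih => rw [prodE, of_crossedMul, ih, List.map_cons, List.prod_cons]

/-- The coaction `ν` as an algebra homomorphism `A #_f H → (A #_f H) ⊗ H`. -/
noncomputable def coaction : CrossedProduct hf →ₐ[k] CrossedProduct hf ⊗[k] H :=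
  AlgHom.ofLinearMap
    (LinearMap.rTensor H (of hf).toLinearMap ∘ₗ nuE k A H ∘ₗ (of hf).symm.toLinearMap)
    (congrArg _ nuE_oneE)
    fun x y => by
      obtain ⟨x, rfl⟩ := (of hf).surjective x
      obtain ⟨y, rfl⟩ := (of hf).surjective y
      simp only [← of_crossedMul, LinearMap.comp_apply, LinearEquiv.coe_coe,
        LinearEquiv.symm_apply_apply]
      induction x with
      | zero => simp
      | add x x' hx hx' => simp only [map_add, LinearMap.add_apply, add_mul, hx, hx']
      | tmul a h =>
      induction y with
      | zero => simp
      | add y y' hy hy' => simp only [map_add, mul_add, hy, hy']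
      | tmul b l =>
        simp [nuE_crossedMul_tmul_tmul σ f (ℛ k h) (ℛ k l), nuE_tmul (ℛ k _),
          Finset.sum_mul_sum, of_crossedMul]

theorem coaction_of (x : A ⊗[k] H) :
    coaction hf (of hf x) = LinearMap.rTensor H (of hf).toLinearMap (nuE k A H x) := rfl

theorem coaction_of_eq_tmul_one_iff (x : A ⊗[k] H) :
    coaction hf (of hf x) = of hf x ⊗ₜ 1 ↔ nuE k A H x = x ⊗ₜ 1 :=
  (LinearEquiv.rTensor H (of hf)).injective.eq_iff (b := x ⊗ₜ 1)

theorem isCoaction_coaction : IsCoaction (coaction hf).toLinearMap where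
  coassoc w := by
    obtain ⟨x, rfl⟩ := (of hf).surjective w
    induction x with
    | zero => simp
    | add x y hx hy => simp only [map_add, hx, hy]
    | tmul a h =>
      have coassoc := congrArg (LinearMap.rTensor (H ⊗[k] H) ((of hf).toLinearMap ∘ₗ mk k A H a))
        (Coalgebra.coassoc_apply (R := k) h)
      simp only [← (ℛ k h).eq, map_sum, LinearMap.rTensor_tmul, LinearMap.lTensor_tmul] at coassoc
      simp only [← (ℛ k ((ℛ k h).left _)).eq, sum_tmul, map_sum] at coassoc
      simpa [coaction_of, nuE_tmul (ℛ k _), sum_tmul] using coassoc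
  counit_smul w := by
    obtain ⟨x, rfl⟩ := (of hf).surjective w
    induction x with
    | zero => simp
    | add x y hx hy => simp only [map_add, hx, hy]
    | tmul a h =>
      simpa [coaction_of, nuE_tmul (ℛ k h)] using
        congrArg ((of hf).toLinearMap ∘ₗ mk k A H a) (sum_counit_right_smul (ℛ k h))

/-- The map `γ : h ↦ 1 # h`. -/
noncomputable def gamma : WithConv (H →ₗ[k] CrossedProduct hf) :=
  toConv ((of hf).toLinearMap ∘ₗ gam k A H)

variable (finv) in
/-- The map `γ⁻¹`, the convolution inverse of `γ` if `finv` is that of `f`. -/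
noncomputable def gammaConvInv : WithConv (H →ₗ[k] CrossedProduct hf) :=
  toConv ((of hf).toLinearMap ∘ₗ gammaInv k A H finv)

@[simp]
theorem gamma_apply (h : H) : gamma hf h = of hf (gam k A H h) := rfl

@[simp]
theorem gammaConvInv_apply (h : H) : gammaConvInv finv hf h = of hf (gammaInv k A H finv h) := rfl

theorem isCleft (hinv : toConv (lift finv) * toConv (lift f) = 1) :
    IsCleft (coaction hf) (gamma hf) (gammaConvInv finv hf) where
  isCoaction := isCoaction_coaction hf
  coact_section := by
    ext h
    refine Eq.trans ?_ ((ℛ k h).convMul_apply _ _).symm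
    simp [gam, coaction_of, nuE_tmul (ℛ k h)]
  coact_inv := by
    ext h
    refine Eq.trans ?_ ((ℛ k h).convMul_apply _ _).symm
    simp [coaction_of, nuE_gammaInv finv (ℛ k h)]
  inv_mul := by
    ext h
    refine ((ℛ k h).convMul_apply _ _).trans ?_
    have inv_mul := congrArg (of hf) (hf.sum_gammaInv_crossedMul_gam hinv (ℛ k h))
    simpa [of_crossedMul, of_oneE, Algebra.algebraMap_eq_smul_one] using inv_mul

theorem cleftWord_eq {m : ℕ} (h : Fin (m + 1) → H) :
    cleftWord (gamma hf) (gammaConvInv finv hf) h =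
      of hf (crossedMul k A H σ f (gam k A H (h 0)) (prodE k A H σ f
        (List.ofFn fun j : Fin m => gammaInv k A H finv (h j.succ)).reverse)) := by
  simp [of_crossedMul, of_prodE, cleftWord, headRevProd, List.map_ofFn,
    Function.comp_def]

theorem of_Udef {n : H → ℕ} {c₁ c₂ : H → ℕ → H} (hrep : IsSweedlerRep k H n c₁ c₂)
    (hinv : toConv (lift finv) * toConv (lift f) = 1) {m : ℕ} (h : Fin (m + 1) → H) :
    of hf (Udef k A H σ f finv n c₁ c₂ h) = coactConv (coaction hf).toLinearMap .id
      (gammaConvInv finv hf) (cleftWord (gamma hf) (gammaConvInv finv hf) h) := by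
  rw [coactConv_apply_of_eq_sum ((isCleft hf hinv).coact_cleftWord fun j => hrep.repr (h j))]
  simp [Udef, cleftWord_eq, of_crossedMul, mul_assoc, IsSweedlerRep.repr]

end CrossedProduct

end CrossedProduct

end CleftExtension

section Statement8

variable (k A H : Type*) [CommRing k] [Ring A] [Algebra k A] [Ring H] [HopfAlgebra k H]

/-- (a) `U(h₀,…,h_i)` is `ν`-coinvariant, hence lies in `A # 1`; and
(b) `γ(h₀) γ⁻¹(h_i) ⋯ γ⁻¹(h₁) = U(h₀⁽¹⁾, h₁⁽²⁾, …, h_i⁽²⁾) γ(h₀⁽²⁾ S(h₁⁽¹⁾ ⋯ h_i⁽¹⁾))`. -/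
theorem U_coinvariant_and_factorization
    (σ : H →ₗ[k] A →ₗ[k] A) (f finv : H →ₗ[k] H →ₗ[k] A)
    (n : H → ℕ) (c₁ c₂ : H → ℕ → H)
    (hrep : IsSweedlerRep k H n c₁ c₂)
    (hweak : IsWeakAction k A H n c₁ c₂ σ)
    (hnormal : IsNormal k A H f)
    (hcocycle : IsCocycle k A H n c₁ c₂ σ f)
    (htwisted : IsTwistedModule k A H n c₁ c₂ σ f)
    (hinv : IsConvInverse k A H n c₁ c₂ f finv)
    (i : ℕ) (hi : 1 ≤ i) (hh : Fin (i + 1) → H) :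
    (nuE k A H (Udef k A H σ f finv n c₁ c₂ hh) =
        Udef k A H σ f finv n c₁ c₂ hh ⊗ₜ[k] (1 : H) ∧
      ∃ a : A, Udef k A H σ f finv n c₁ c₂ hh = a ⊗ₜ[k] (1 : H)) ∧
    (crossedMul k A H σ f (gam k A H (hh 0))
        (prodE k A H σ f
          ((List.ofFn (fun j : Fin i => gammaInv k A H finv (hh j.succ))).reverse)) =
      ∑ q ∈ Fintype.piFinset (fun j : Fin (i + 1) => Finset.range (n (hh j))),
        crossedMul k A H σ f
          (Udef k A H σ f finv n c₁ c₂
            (Fin.cons (c₁ (hh 0) (q 0)) (fun j : Fin i => c₂ (hh j.succ) (q j.succ))))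
          (gam k A H
            (c₂ (hh 0) (q 0) *
              HopfAlgebra.antipode (R := k)
                ((List.ofFn (fun j : Fin i => c₁ (hh j.succ) (q j.succ))).prod)))) := by
  have hf := hrep.isCrossedSystem hweak hnormal hcocycle htwisted
  have finv_mul := hinv.toConv_mul hrep
  have hcleft := CrossedProduct.isCleft hf finv_mul
  have coinvariant : nuE k A H (Udef k A H σ f finv n c₁ c₂ hh) =
      Udef k A H σ f finv n c₁ c₂ hh ⊗ₜ 1 := by
    rw [← CrossedProduct.coaction_of_eq_tmul_one_iff hf, CrossedProduct.of_Udef hf hrep finv_mul]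
    exact hcleft.coact_coactConv_inv _
  refine ⟨⟨coinvariant, exists_eq_tmul_one_of_nuE_eq coinvariant⟩,
    (CrossedProduct.of hf).injective ?_⟩
  have factorization := congr($hcleft.coactConv_coactConv_inv
    (cleftWord (CrossedProduct.gamma hf) (CrossedProduct.gammaConvInv finv hf) hh))
  rw [coactConv_apply_of_eq_sum (hcleft.coact_cleftWord fun j => hrep.repr (hh j)),
    LinearMap.id_apply, CrossedProduct.cleftWord_eq] at factorization
  rw [← factorization, map_sum]
  simp only [CrossedProduct.of_crossedMul, CrossedProduct.of_Udef hf hrep finv_mul]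
  rfl

end Statement8
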